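/- (Weierstraß representation formula for timelike minimal surfaces, converse part.) Let D ⊆ ℝ² be open with coordinates (u,v), and let φ = (φ₁,φ₂,φ₃) : D → ℝ³ be smooth with φ_uv = 0 and ⟨φ_u,φ_u⟩ = ⟨φ_v,φ_v⟩ = 0. Write ξ = (ξ₁,ξ₂,ξ₃) := φ_u and η = (η₁,η₂,η₃) := φ_v, and assume f := ξ₁ − ξ₂ and g := −(η₁ + η₂) are nonvanishing on D. Then the functions q := −ξ₃/f and r := −η₃/g satisfy φ_u = (½(1+q²), −½(1−q²), −q)·f and φ_v = (−½(1+r²), −½(1−r²), −r)·g on D, with ∂_v q = ∂_v f = 0 and ∂_u r = ∂_u g = 0. Hence every such timelike minimal surface is given by the Weierstraß representation formula up to translations. -/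

import Mathlib

noncomputable section

/-- The Minkowski bilinear form on `𝔼³₁ = ℝ³`: `⟨a,b⟩ = −a₁b₁ + a₂b₂ + a₃b₃`. -/
def mink (a b : ℝ × ℝ × ℝ) : ℝ := -(a.1 * b.1) + a.2.1 * b.2.1 + a.2.2 * b.2.2

/-- Partial derivative in the first coordinate. -/
def pu {E : Type*} [NormedAddCommGroup E] [NormedSpace ℝ E] (f : ℝ × ℝ → E) (w : ℝ × ℝ) : E :=
  fderiv ℝ f w (1, 0)

/-- Partial derivative in the second coordinate. -/
def pv {E : Type*} [NormedAddCommGroup E] [NormedSpace ℝ E] (f : ℝ × ℝ → E) (w : ℝ × ℝ) : E :=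
  fderiv ℝ f w (0, 1)

/-!
A null vector `a` satisfies `(a₁ - a₂)(a₁ + a₂) = a₃²`, so `f = a₁ - a₂` and `q = -a₃ / f` determine
it: `a₁ + a₂ = q² f`. Applied to `φ_u` this is the first formula; the time reflection
`(a₁, a₂, a₃) ↦ (-a₁, a₂, a₃)` preserves the Minkowski form and exchanges `(f, q)` for `(g, r)`,
which gives the formula for `φ_v`. The holomorphy statements are the chain rule: `f` and `q` are
differentiable functions of `φ_u`, whose `v`-derivative vanishes, and `g` and `r` are differentiable
functions of `φ_v`, whose `u`-derivative vanishes because mixed partial derivatives commute.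
-/

section Calculus

variable {𝕜 E F G : Type*} [NontriviallyNormedField 𝕜] [NormedAddCommGroup E] [NormedSpace 𝕜 E]
  [NormedAddCommGroup F] [NormedSpace 𝕜 F] [NormedAddCommGroup G] [NormedSpace 𝕜 G]

theorem fderiv_comp_apply_eq_zero {g : F → G} {f : E → F} {x e : E}
    (hg : DifferentiableAt 𝕜 g (f x)) (hf : DifferentiableAt 𝕜 f x) (h : fderiv 𝕜 f x e = 0) :
    fderiv 𝕜 (fun y ↦ g (f y)) x e = 0 := by
  rw [fderiv_fun_comp x hg hf, ContinuousLinearMap.comp_apply, h, map_zero]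

theorem fderiv_clm_apply_const {c : E → F →L[𝕜] G} {x : E} (hc : DifferentiableAt 𝕜 c x)
    (e : E) (u : F) : fderiv 𝕜 (fun y ↦ c y u) x e = fderiv 𝕜 c x e u := by
  simp [fderiv_clm_apply hc (differentiableAt_const u)]

end Calculus

section PartialDerivatives

variable {E : Type*} [NormedAddCommGroup E] [NormedSpace ℝ E] {φ : ℝ × ℝ → E} {w : ℝ × ℝ}

theorem differentiableAt_pu (hφ : DifferentiableAt ℝ (fderiv ℝ φ) w) :
    DifferentiableAt ℝ (pu φ) w :=
  hφ.clm_apply (differentiableAt_const _)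

theorem differentiableAt_pv (hφ : DifferentiableAt ℝ (fderiv ℝ φ) w) :
    DifferentiableAt ℝ (pv φ) w :=
  hφ.clm_apply (differentiableAt_const _)

theorem pu_pv_eq_pv_pu (hφ : DifferentiableAt ℝ (fderiv ℝ φ) w) (hsymm : IsSymmSndFDerivAt ℝ φ w) :
    pu (pv φ) w = pv (pu φ) w :=
  calc
    pu (pv φ) w = fderiv ℝ (fderiv ℝ φ) w (1, 0) (0, 1) := fderiv_clm_apply_const hφ _ _
    _ = fderiv ℝ (fderiv ℝ φ) w (0, 1) (1, 0) := hsymm.eq _ _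
    _ = pv (pu φ) w := (fderiv_clm_apply_const hφ _ _).symm

end PartialDerivatives

/-- The function `f = ξ₁ - ξ₂` of the Weierstraß data, as a function of `ξ = φ_u`. -/
def weierstrassF (ξ : ℝ × ℝ × ℝ) : ℝ := ξ.1 - ξ.2.1

/-- The function `q = -ξ₃ / f` of the Weierstraß data, as a function of `ξ = φ_u`; it has the
junk value `0` where `f = 0`. -/
def weierstrassQ (ξ : ℝ × ℝ × ℝ) : ℝ := -ξ.2.2 / weierstrassF ξ

/-- The function `g = -(η₁ + η₂)` of the Weierstraß data, as a function of `η = φ_v`. -/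
def weierstrassG (η : ℝ × ℝ × ℝ) : ℝ := -(η.1 + η.2.1)

/-- The function `r = -η₃ / g` of the Weierstraß data, as a function of `η = φ_v`; it has the
junk value `0` where `g = 0`. -/
def weierstrassR (η : ℝ × ℝ × ℝ) : ℝ := -η.2.2 / weierstrassG η

/-- The reflection of Minkowski space that reverses its timelike (first) coordinate. -/
def timeReflection (a : ℝ × ℝ × ℝ) : ℝ × ℝ × ℝ := (-a.1, a.2)

section NullCone

variable {ξ η : ℝ × ℝ × ℝ}

theorem mink_self_eq_zero_iff : mink ξ ξ = 0 ↔ (ξ.1 - ξ.2.1) * (ξ.1 + ξ.2.1) = ξ.2.2 ^ 2 := by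
  unfold mink
  constructor <;> intro h <;> linarith

theorem eq_weierstrassF_smul (hnull : mink ξ ξ = 0) (hf : weierstrassF ξ ≠ 0) :
    ξ = weierstrassF ξ •
      ((1 / 2 * (1 + weierstrassQ ξ ^ 2), -(1 / 2) * (1 - weierstrassQ ξ ^ 2),
        -weierstrassQ ξ) : ℝ × ℝ × ℝ) := by
  have hdiff : ξ.1 - ξ.2.1 = weierstrassF ξ := rfl
  have hthird : weierstrassF ξ * weierstrassQ ξ = -ξ.2.2 := mul_div_cancel₀ _ hf
  have hsum : ξ.1 + ξ.2.1 = weierstrassF ξ * weierstrassQ ξ ^ 2 := by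
    apply mul_left_cancel₀ hf
    calc
      weierstrassF ξ * (ξ.1 + ξ.2.1) = ξ.2.2 ^ 2 := mink_self_eq_zero_iff.mp hnull
      _ = (weierstrassF ξ * weierstrassQ ξ) ^ 2 := by rw [hthird, neg_sq]
      _ = weierstrassF ξ * (weierstrassF ξ * weierstrassQ ξ ^ 2) := by ring
  ext <;> simp only [Prod.smul_mk, smul_eq_mul] <;> linarith

theorem mink_timeReflection : mink (timeReflection ξ) (timeReflection η) = mink ξ η := by
  simp [mink, timeReflection]

theorem weierstrassF_timeReflection : weierstrassF (timeReflection η) = weierstrassG η :=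
  (neg_add' _ _).symm

theorem weierstrassQ_timeReflection : weierstrassQ (timeReflection η) = weierstrassR η := by
  rw [weierstrassQ, weierstrassF_timeReflection, timeReflection, weierstrassR]

theorem eq_weierstrassG_smul (hnull : mink η η = 0) (hg : weierstrassG η ≠ 0) :
    η = weierstrassG η •
      ((-(1 / 2) * (1 + weierstrassR η ^ 2), -(1 / 2) * (1 - weierstrassR η ^ 2),
        -weierstrassR η) : ℝ × ℝ × ℝ) := by
  have hreflected := eq_weierstrassF_smul (mink_timeReflection.trans hnull)
    (weierstrassF_timeReflection.trans_ne hg)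
  rw [weierstrassF_timeReflection, weierstrassQ_timeReflection, timeReflection,
    Prod.smul_mk, Prod.mk.injEq] at hreflected
  obtain ⟨htime, hspace⟩ := hreflected
  refine Prod.ext ?_ hspace
  rw [Prod.smul_fst, neg_mul, smul_neg, ← htime, neg_neg]

@[fun_prop]
theorem differentiable_weierstrassF : Differentiable ℝ weierstrassF := by
  unfold weierstrassF
  fun_prop

@[fun_prop]
theorem differentiable_weierstrassG : Differentiable ℝ weierstrassG := by
  unfold weierstrassG
  fun_prop

theorem differentiableAt_weierstrassQ (hf : weierstrassF ξ ≠ 0) :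
    DifferentiableAt ℝ weierstrassQ ξ := by
  unfold weierstrassQ
  fun_prop (disch := exact hf)

theorem differentiableAt_weierstrassR (hg : weierstrassG η ≠ 0) :
    DifferentiableAt ℝ weierstrassR η := by
  unfold weierstrassR
  fun_prop (disch := exact hg)

end NullCone

theorem weierstrass_representation_converse_general {φ : ℝ × ℝ → ℝ × ℝ × ℝ} {w : ℝ × ℝ}
    (hφ : ContDiffAt ℝ 2 φ w) (hwave : pv (pu φ) w = 0)
    (hnull₁ : mink (pu φ w) (pu φ w) = 0) (hnull₂ : mink (pv φ w) (pv φ w) = 0)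
    (hf : weierstrassF (pu φ w) ≠ 0) (hg : weierstrassG (pv φ w) ≠ 0) :
    (pu φ w = weierstrassF (pu φ w) •
      ((1 / 2 * (1 + weierstrassQ (pu φ w) ^ 2), -(1 / 2) * (1 - weierstrassQ (pu φ w) ^ 2),
        -weierstrassQ (pu φ w)) : ℝ × ℝ × ℝ)) ∧
    (pv φ w = weierstrassG (pv φ w) •
      ((-(1 / 2) * (1 + weierstrassR (pv φ w) ^ 2), -(1 / 2) * (1 - weierstrassR (pv φ w) ^ 2),
        -weierstrassR (pv φ w)) : ℝ × ℝ × ℝ)) ∧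
    pv (fun z ↦ weierstrassQ (pu φ z)) w = 0 ∧ pv (fun z ↦ weierstrassF (pu φ z)) w = 0 ∧
    pu (fun z ↦ weierstrassR (pv φ z)) w = 0 ∧ pu (fun z ↦ weierstrassG (pv φ z)) w = 0 := by
  have hdiff : DifferentiableAt ℝ (fderiv ℝ φ) w :=
    (hφ.fderiv_right (m := 1) (by norm_num)).differentiableAt one_ne_zero
  have hdiff_u : DifferentiableAt ℝ (pu φ) w := differentiableAt_pu hdiff
  have hdiff_v : DifferentiableAt ℝ (pv φ) w := differentiableAt_pv hdiff
  have hwave' : pu (pv φ) w = 0 :=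
    (pu_pv_eq_pv_pu hdiff (hφ.isSymmSndFDerivAt (by simp))).trans hwave
  exact ⟨eq_weierstrassF_smul hnull₁ hf, eq_weierstrassG_smul hnull₂ hg,
    fderiv_comp_apply_eq_zero (differentiableAt_weierstrassQ hf) hdiff_u hwave,
    fderiv_comp_apply_eq_zero (differentiable_weierstrassF _) hdiff_u hwave,
    fderiv_comp_apply_eq_zero (differentiableAt_weierstrassR hg) hdiff_v hwave',
    fderiv_comp_apply_eq_zero (differentiable_weierstrassG _) hdiff_v hwave'⟩

/-- Weierstraß representation formula for timelike minimal surfaces (converse part):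
any conformal timelike minimal surface `φ` (i.e. `φ_uv = 0`, `⟨φ_u,φ_u⟩ = ⟨φ_v,φ_v⟩ = 0`)
with `f := ξ₁ − ξ₂`, `g := −(η₁ + η₂)` nonvanishing (`ξ = φ_u`, `η = φ_v`) is given by the
Weierstraß data `q := −ξ₃/f` (Lorentz holomorphic, together with `f`) and `r := −η₃/g`
(Lorentz antiholomorphic, together with `g`). -/
theorem weierstrass_representation_converse
    (D : Set (ℝ × ℝ)) (hD : IsOpen D)
    (φ : ℝ × ℝ → ℝ × ℝ × ℝ) (hφ : ContDiffOn ℝ (⊤ : ℕ∞) φ D)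
    (hwave : ∀ w ∈ D, pv (pu φ) w = 0)
    (hnull₁ : ∀ w ∈ D, mink (pu φ w) (pu φ w) = 0)
    (hnull₂ : ∀ w ∈ D, mink (pv φ w) (pv φ w) = 0)
    (hfnz : ∀ w ∈ D, (pu φ w).1 - (pu φ w).2.1 ≠ 0)
    (hgnz : ∀ w ∈ D, -((pv φ w).1 + (pv φ w).2.1) ≠ 0) :
    ∀ w ∈ D,
      (pu φ w = ((pu φ w).1 - (pu φ w).2.1) •
        ((1/2 * (1 + (-(pu φ w).2.2 / ((pu φ w).1 - (pu φ w).2.1))^2),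
          -(1/2) * (1 - (-(pu φ w).2.2 / ((pu φ w).1 - (pu φ w).2.1))^2),
          -(-(pu φ w).2.2 / ((pu φ w).1 - (pu φ w).2.1))) : ℝ × ℝ × ℝ)) ∧
      (pv φ w = (-((pv φ w).1 + (pv φ w).2.1)) •
        ((-(1/2) * (1 + (-(pv φ w).2.2 / (-((pv φ w).1 + (pv φ w).2.1)))^2),
          -(1/2) * (1 - (-(pv φ w).2.2 / (-((pv φ w).1 + (pv φ w).2.1)))^2),
          -(-(pv φ w).2.2 / (-((pv φ w).1 + (pv φ w).2.1)))) : ℝ × ℝ × ℝ)) ∧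
      pv (fun z => -(pu φ z).2.2 / ((pu φ z).1 - (pu φ z).2.1)) w = 0 ∧
      pv (fun z => (pu φ z).1 - (pu φ z).2.1) w = 0 ∧
      pu (fun z => -(pv φ z).2.2 / (-((pv φ z).1 + (pv φ z).2.1))) w = 0 ∧
      pu (fun z => -((pv φ z).1 + (pv φ z).2.1)) w = 0 :=
  fun w hw ↦ weierstrass_representation_converse_general
    ((hφ.contDiffAt (hD.mem_nhds hw)).of_le ENat.LEInfty.out)
    (hwave w hw) (hnull₁ w hw) (hnull₂ w hw) (hfnz w hw) (hgnz w hw)
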